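/- If a continuous map f : I → I of a compact interval I has a period-6 point, then f has periodic points of all even least periods. -/

import Mathlib

/-- `x` is a periodic point of `f` with least period `m`. -/
def PeriodPt (f : ℝ → ℝ) (m : ℕ) (x : ℝ) : Prop :=
  f^[m] x = x ∧ ∀ i : ℕ, 0 < i → i < m → f^[i] x ≠ x

/-!
Write `g = f²`. A point of `g`-period `k` has `f`-period `2k`, unless `k` is odd and its `f`-period
is `k`; the latter is excluded once its `g`-orbit stays on one side of a fixed point `z` of `f`
while `f` sends it to the other side. The task is thus to find `g`-orbits of every period below
such a `z`. Let `m` be the least point of the 6-cycle; there is `v > m` with `f v > v` and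
`f² v = m`, hence a fixed point `z > v` of `f`. Let `c ≤ z` be the first fixed point of `g` to the
right of `v`. If `g` reaches `c` somewhere on `[m, v]`, then `g` has a horseshoe there, and hence
orbits of every period. Otherwise `g` maps `[m, c)` below `c`, so that the 3-cycle of `m` under `g`
lies in `[m, c)`, and Li and Yorke's "period three implies all periods" applies.
-/

open Function Set

theorem periodPt_iff_minimalPeriod_eq {f : ℝ → ℝ} {m : ℕ} {x : ℝ} (hm : 0 < m) :
    PeriodPt f m x ↔ minimalPeriod f x = m := by
  refine ⟨fun ⟨hper, hne⟩ => ?_, ?_⟩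
  · refine (IsPeriodicPt.minimalPeriod_le hm hper).antisymm (le_of_not_gt fun hlt => ?_)
    exact hne _ (IsPeriodicPt.minimalPeriod_pos hm hper) hlt iterate_minimalPeriod
  · rintro rfl
    exact ⟨iterate_minimalPeriod, fun i hi hlt =>
      not_isPeriodicPt_of_pos_of_lt_minimalPeriod hi.ne' hlt⟩

theorem minimalPeriod_restrict {α : Type*} {s : Set α} {f : α → α} (h : MapsTo f s s) (x : s) :
    minimalPeriod (h.restrict f s s) x = minimalPeriod f x :=
  minimalPeriod_eq_minimalPeriod_iff.2 fun n => by
    rw [IsPeriodicPt, IsPeriodicPt, IsFixedPt, IsFixedPt, Subtype.ext_iff,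
      h.coe_iterate_restrict]

theorem exists_forall_iterate_le_iterate {α : Type*} [LinearOrder α] {f : α → α} {x : α}
    (hx : x ∈ periodicPts f) : ∃ i, ∀ j, f^[i] x ≤ f^[j] (f^[i] x) := by
  have hpos := minimalPeriod_pos_of_mem_periodicPts hx
  obtain ⟨i, -, hi⟩ := (Finset.range (minimalPeriod f x)).exists_min_image (f^[·] x)
    ⟨0, Finset.mem_range.2 hpos⟩
  refine ⟨i, fun j => ?_⟩
  rw [← iterate_add_apply, ← iterate_mod_minimalPeriod_eq (n := j + i)]
  exact hi _ (Finset.mem_range.2 (Nat.mod_lt _ hpos))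

theorem minimalPeriod_eq_two_mul {α : Type*} [PartialOrder α] {f : α → α} {y z : α}
    (hz : IsFixedPt f z) (hyz : y ≠ z) (hfy : z ≤ f y) (horb : ∀ i, (f^[2])^[i] y ≤ z) :
    minimalPeriod f y = 2 * minimalPeriod f^[2] y := by
  have heven : Even (minimalPeriod f y) := by
    by_contra hodd
    obtain ⟨j, hj⟩ := Nat.not_even_iff_odd.1 hodd
    have hy : f^[2 * j + 1] y = y := hj ▸ iterate_minimalPeriod
    have hfy_orb : (f^[2])^[j + 1] y = f y := by
      rw [← iterate_mul, mul_add, mul_one, iterate_succ_apply', hy]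
    have hfyz : f y = z := (hfy_orb ▸ horb (j + 1)).antisymm hfy
    rw [iterate_succ_apply, hfyz, hz.iterate] at hy
    exact hyz hy.symm
  rw [minimalPeriod_iterate_eq_div_gcd two_ne_zero, Nat.gcd_eq_right heven.two_dvd,
    Nat.mul_div_cancel' heven.two_dvd]

section ConditionallyCompleteLinearOrder

variable {α δ : Type*} [ConditionallyCompleteLinearOrder α] [TopologicalSpace α] [OrderTopology α]
  [DenselyOrdered α] [LinearOrder δ] [TopologicalSpace δ] [OrderClosedTopology δ]

theorem exists_mem_Ioc_eq_forall_lt {F G : α → δ} {u w : α} (huw : u ≤ w)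
    (hF : ContinuousOn F (Icc u w)) (hG : ContinuousOn G (Icc u w)) (hu : F u < G u)
    (hw : G w ≤ F w) : ∃ c ∈ Ioc u w, F c = G c ∧ ∀ t ∈ Ico u c, F t < G t := by
  have hcompact : IsCompact {t ∈ Icc u w | G t ≤ F t} :=
    isCompact_Icc.of_isClosed_subset (isClosed_Icc.isClosed_le hG hF) (sep_subset _ _)
  obtain ⟨c, ⟨hc, hGF⟩, hleast⟩ := hcompact.exists_isLeast ⟨w, right_mem_Icc.2 huw, hw⟩
  have hlt : ∀ t ∈ Ico u c, F t < G t := fun t ht =>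
    lt_of_not_ge fun h => ht.2.not_ge (hleast ⟨⟨ht.1, ht.2.le.trans hc.2⟩, h⟩)
  have hsub : Icc u c ⊆ Icc u w := Icc_subset_Icc_right hc.2
  obtain ⟨s, hs, hFG⟩ := isPreconnected_Icc.intermediate_value₂ (left_mem_Icc.2 hc.1)
    (right_mem_Icc.2 hc.1) (hF.mono hsub) (hG.mono hsub) hu.le hGF
  have hsc : s = c := hs.2.antisymm (hleast ⟨hsub hs, hFG.ge⟩)
  subst hsc
  exact ⟨s, ⟨hc.1.lt_of_ne fun h => hu.not_ge (h ▸ hGF), hc.2⟩, hFG, hlt⟩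

theorem exists_mem_Ico_eq_forall_lt {F G : α → δ} {u w : α} (huw : u ≤ w)
    (hF : ContinuousOn F (Icc u w)) (hG : ContinuousOn G (Icc u w)) (hu : G u ≤ F u)
    (hw : F w < G w) : ∃ c ∈ Ico u w, F c = G c ∧ ∀ t ∈ Ioc c w, F t < G t := by
  obtain ⟨c, hc, heq, hlt⟩ := exists_mem_Ioc_eq_forall_lt (α := αᵒᵈ)
    (F := F ∘ OrderDual.ofDual) (G := G ∘ OrderDual.ofDual) (OrderDual.toDual_le_toDual.2 huw)
    (by rw [Icc_toDual]; exact hF) (by rw [Icc_toDual]; exact hG) hw hu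
  exact ⟨OrderDual.ofDual c, ⟨hc.2, hc.1⟩, heq, fun t ht => hlt (OrderDual.toDual t) ⟨ht.2, ht.1⟩⟩

theorem exists_Icc_mapsTo_Icc {g : α → δ} {u w : α} (huw : u ≤ w)
    (hg : ContinuousOn g (Icc u w)) (hle : g u ≤ g w) :
    ∃ p ∈ Icc u w, ∃ q ∈ Icc p w, g p = g u ∧ g q = g w ∧
      MapsTo g (Icc p q) (Icc (g u) (g w)) := by
  rcases hle.eq_or_lt with heq | hlt
  · exact ⟨u, left_mem_Icc.2 huw, u, left_mem_Icc.2 huw, rfl, heq, by simp [heq]⟩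
  obtain ⟨p, hp, hgp, hpw⟩ :=
    exists_mem_Ico_eq_forall_lt huw continuousOn_const hg le_rfl hlt
  obtain ⟨q, hq, hgq, hpq⟩ := exists_mem_Ioc_eq_forall_lt hp.2.le
    (hg.mono (Icc_subset_Icc_left hp.1)) continuousOn_const (hgp ▸ hlt) le_rfl
  refine ⟨p, Ico_subset_Icc_self hp, q, Ioc_subset_Icc_self hq, hgp.symm, hgq,
    fun t ht => ⟨?_, ?_⟩⟩
  · rcases ht.1.eq_or_lt with rfl | h
    exacts [hgp.le, (hpw t ⟨h, ht.2.trans hq.2⟩).le]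
  · rcases ht.2.eq_or_lt with rfl | h
    exacts [hgq.le, (hpq t ⟨ht.1, h⟩).le]

theorem exists_Icc_mapsTo_uIcc {g : α → δ} {u w : α} (huw : u ≤ w)
    (hg : ContinuousOn g (Icc u w)) :
    ∃ p ∈ Icc u w, ∃ q ∈ Icc p w, g p = g u ∧ g q = g w ∧
      MapsTo g (Icc p q) (uIcc (g u) (g w)) := by
  rcases le_total (g u) (g w) with hle | hge
  · rw [uIcc_of_le hle]
    exact exists_Icc_mapsTo_Icc huw hg hle
  · rw [uIcc_of_ge hge]
    obtain ⟨p, hp, q, hq, hgp, hgq, hmaps⟩ :=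
      exists_Icc_mapsTo_Icc (g := OrderDual.toDual ∘ g) huw hg hge
    exact ⟨p, hp, q, hq, hgp, hgq, fun t ht => (hmaps ht).symm⟩

theorem exists_nonemptyInterval_le_image_eq {g : α → δ} {I : NonemptyInterval α}
    {J : NonemptyInterval δ} (hg : ContinuousOn g I) (h : SurjOn g I J) :
    ∃ L ≤ I, g '' L = J := by
  suffices ∃ u ∈ I, ∃ w ∈ I, u ≤ w ∧ uIcc (g u) (g w) = J by
    obtain ⟨u, hu, w, hw, huw, hJ⟩ := this
    have hsub : Icc u w ⊆ I := Icc_subset_Icc hu.1 hw.2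
    obtain ⟨p, hp, q, hq, hgp, hgq, hmaps⟩ := exists_Icc_mapsTo_uIcc huw (hg.mono hsub)
    have hLI : Icc p q ⊆ I := (Icc_subset_Icc hp.1 hq.2).trans hsub
    refine ⟨⟨(p, q), hq.1⟩, NonemptyInterval.coe_subset_coe.1 hLI,
      (hJ ▸ hmaps.image_subset).antisymm ?_⟩
    rw [← hJ, ← hgp, ← hgq]
    exact (hg.mono hLI).surjOn_uIcc (left_mem_Icc.2 hq.1) (right_mem_Icc.2 hq.1)
  obtain ⟨u, hu, hgu⟩ := h (left_mem_Icc.2 J.fst_le_snd)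
  obtain ⟨w, hw, hgw⟩ := h (right_mem_Icc.2 J.fst_le_snd)
  rcases le_total u w with huw | hwu
  · exact ⟨u, hu, w, hw, huw, by rw [hgu, hgw, uIcc_of_le J.fst_le_snd]; rfl⟩
  · exact ⟨w, hw, u, hu, hwu, by rw [hgu, hgw, uIcc_of_ge J.fst_le_snd]; rfl⟩

theorem exists_nonemptyInterval_forall_mapsTo_iterate {g : α → α} (hg : Continuous g)
    {I : ℕ → NonemptyInterval α} (hI : ∀ i, SurjOn g (I i) (I (i + 1))) (n : ℕ) :
    ∃ L : NonemptyInterval α, (∀ i ≤ n, MapsTo g^[i] L (I i)) ∧ SurjOn g^[n] L (I n) := by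
  induction n generalizing I with
  | zero =>
    refine ⟨I 0, fun i hi => ?_, surjOn_id _⟩
    obtain rfl := Nat.le_zero.1 hi
    exact mapsTo_id _
  | succ n ih =>
    obtain ⟨L, hmaps, hsurj⟩ := ih fun i => hI (i + 1)
    have hL : L ≤ I 1 := NonemptyInterval.coe_subset_coe.1 (hmaps 0 n.zero_le)
    obtain ⟨M, hM, himage⟩ := exists_nonemptyInterval_le_image_eq hg.continuousOn
      ((hI 0).mono subset_rfl (NonemptyInterval.coe_subset_coe.2 hL))
    refine ⟨M, ?_, hsurj.comp himage.superset⟩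
    rintro (_ | i) hi
    · exact NonemptyInterval.coe_subset_coe.2 hM
    · exact (hmaps i (Nat.le_of_succ_le_succ hi)).comp (mapsTo_iff_image_subset.2 himage.subset)

theorem exists_isPeriodicPt_forall_iterate_mem {g : α → α} (hg : Continuous g)
    {I : ℕ → NonemptyInterval α} (hI : ∀ i, SurjOn g (I i) (I (i + 1))) {n : ℕ} (hn : I n = I 0) :
    ∃ y, IsPeriodicPt g n y ∧ ∀ i ≤ n, g^[i] y ∈ I i := by
  obtain ⟨L, hmaps, hsurj⟩ := exists_nonemptyInterval_forall_mapsTo_iterate hg hI n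
  have hL : (L : Set α) ⊆ I n := hn ▸ hmaps 0 n.zero_le
  obtain ⟨y, hy, hfix⟩ := exists_mem_Icc_isFixedPt_of_surjOn (hg.iterate n).continuousOn
    L.fst_le_snd (hsurj.mono subset_rfl hL)
  exact ⟨y, hfix, fun i hi => hmaps i hi hy⟩

/-- The cycle follows the itinerary `K → J → K → ⋯ → K`. If its period were a proper divisor of `k`,
then `g y` would also lie in `K`, which `hJK` excludes. -/
theorem exists_minimalPeriod_eq_of_surjOn {g : α → α} (hg : Continuous g)
    {J K : NonemptyInterval α} (hJ : SurjOn g J K) (hKJ : SurjOn g K J) (hKK : SurjOn g K K)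
    (hJK : ∀ c ∈ J, c ∈ K → g c ∈ K → g (g c) ∉ K) {k : ℕ} (hk : 0 < k) :
    ∃ y ∈ K, minimalPeriod g y = k ∧ ∀ i, g^[i] y ∈ (J ∪ K : Set α) := by
  obtain rfl | hk2 : k = 1 ∨ 2 ≤ k := by omega
  · obtain ⟨y, hy, hfix⟩ := exists_mem_Icc_isFixedPt_of_surjOn hg.continuousOn K.fst_le_snd hKK
    exact ⟨y, hy, minimalPeriod_eq_one_iff_isFixedPt.2 hfix, fun i => by
      rw [hfix.iterate]; exact Or.inr hy⟩
  obtain ⟨y, hy, hitin⟩ := exists_isPeriodicPt_forall_iterate_mem (n := k) hg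
    (I := fun i => if i = 1 then J else K) (by rintro (_ | _ | i) <;> simp [hJ, hKJ, hKK])
    (by simp [show k ≠ 1 by omega])
  have hJ1 : g y ∈ J := by simpa using hitin 1 hk
  have hK : ∀ i ≤ k, i ≠ 1 → g^[i] y ∈ K := fun i hi h1 => by simpa [h1] using hitin i hi
  refine ⟨y, hK 0 k.zero_le zero_ne_one, (hy.minimalPeriod_le hk).eq_of_not_lt fun hlt => ?_,
    fun i => ?_⟩
  · have hpos := hy.minimalPeriod_pos hk
    have hK1 : g y ∈ K := by
      rw [← iterate_one g, ← iterate_add_minimalPeriod_eq]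
      exact hK _ (by omega) (by omega)
    have hK3 : g^[3] y ∈ K := by
      obtain rfl | hk3 : k = 2 ∨ 3 ≤ k := by omega
      · rwa [iterate_succ_apply', hy.eq]
      · exact hK 3 hk3 (by norm_num)
    exact hJK (g y) hJ1 hK1 (hK 2 hk2 (by norm_num)) hK3
  · rw [← hy.iterate_mod_apply]
    by_cases h1 : i % k = 1
    · exact Or.inl (h1 ▸ hJ1)
    · exact Or.inr (hK _ (Nat.mod_lt i hk).le h1)

theorem exists_minimalPeriod_eq_of_three_cycle {g : α → α} (hg : Continuous g) {m p q : α}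
    (hm : g m = p) (hp : g p = q) (hq : g q = m) (hmp : m < p) (hmq : m < q) {k : ℕ}
    (hk : 0 < k) : ∃ y, minimalPeriod g y = k ∧ ∀ i, g^[i] y ∈ Icc m (p ⊔ q) := by
  have hpq : p ≠ q := by
    rintro rfl
    exact hmp.ne (hq.symm.trans hp)
  rcases hpq.lt_or_gt with hpq | hqp
  · have hJ : SurjOn g (Icc m p) (Icc p q) := by
      simpa only [SurjOn, hm, hp] using intermediate_value_Icc hmp.le hg.continuousOn
    have hK : SurjOn g (Icc p q) (Icc m q) := by
      simpa only [SurjOn, hp, hq] using intermediate_value_Icc' hpq.le hg.continuousOn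
    obtain ⟨y, -, hy, hmem⟩ := exists_minimalPeriod_eq_of_surjOn hg
      (J := ⟨(m, p), hmp.le⟩) (K := ⟨(p, q), hpq.le⟩) hJ
      (hK.mono subset_rfl (Icc_subset_Icc_right hpq.le))
      (hK.mono subset_rfl (Icc_subset_Icc_left hmp.le))
      (fun c hcJ hcK _ hgg => by
        obtain rfl : c = p := hcJ.2.antisymm hcK.1
        rw [hp, hq] at hgg
        exact hmp.not_ge hgg.1) hk
    refine ⟨y, hy, fun i => ?_⟩
    rw [sup_of_le_right hpq.le, ← Icc_union_Icc_eq_Icc hmp.le hpq.le]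
    exact hmem i
  · have hJ : SurjOn g (Icc q p) (Icc m q) := by
      simpa only [SurjOn, hq, hp] using intermediate_value_Icc hqp.le hg.continuousOn
    have hK : SurjOn g (Icc m q) (Icc m p) := by
      simpa only [SurjOn, hm, hq] using intermediate_value_Icc' hmq.le hg.continuousOn
    obtain ⟨y, -, hy, hmem⟩ := exists_minimalPeriod_eq_of_surjOn hg
      (J := ⟨(q, p), hqp.le⟩) (K := ⟨(m, q), hmq.le⟩) hJ
      (hK.mono subset_rfl (Icc_subset_Icc_left hmq.le))
      (hK.mono subset_rfl (Icc_subset_Icc_right hqp.le))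
      (fun c hcJ hcK _ hgg => by
        obtain rfl : c = q := hcK.2.antisymm hcJ.1
        rw [hq, hm] at hgg
        exact hqp.not_ge hgg.2) hk
    refine ⟨y, hy, fun i => ?_⟩
    rw [sup_of_le_left hqp.le, ← Icc_union_Icc_eq_Icc hmq.le hqp.le]
    exact (hmem i).symm

theorem exists_minimalPeriod_eq_of_minimalPeriod_eq_three {g : α → α} (hg : Continuous g)
    {s : Set α} (hs : s.OrdConnected) {x : α} (hxs : ∀ i, g^[i] x ∈ s)
    (hx : minimalPeriod g x = 3) {k : ℕ} (hk : 0 < k) :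
    ∃ y, minimalPeriod g y = k ∧ ∀ i, g^[i] y ∈ s := by
  have hxper : x ∈ periodicPts g := minimalPeriod_pos_iff_mem_periodicPts.1 (by omega)
  obtain ⟨i, hmin⟩ := exists_forall_iterate_le_iterate hxper
  have hms : ∀ j, g^[j] (g^[i] x) ∈ s := fun j => by rw [← iterate_add_apply]; exact hxs _
  have hm := (minimalPeriod_apply_iterate hxper i).trans hx
  generalize g^[i] x = m at hmin hms hm
  have hlt : ∀ j ∈ Ioo 0 3, m < g^[j] m := fun j hj =>
    (hmin j).lt_of_ne' (not_isPeriodicPt_of_pos_of_lt_minimalPeriod hj.1.ne' (hm ▸ hj.2))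
  have hper : g^[3] m = m := by rw [← hm, iterate_minimalPeriod]
  obtain ⟨y, hy, hmem⟩ := exists_minimalPeriod_eq_of_three_cycle hg rfl rfl hper
    (hlt 1 (by simp)) (hlt 2 (by simp)) hk
  exact ⟨y, hy, fun j => hs.out (hms 0) (max_rec' (· ∈ s) (hms 1) (hms 2)) (hmem j)⟩

theorem exists_minimalPeriod_eq_of_horseshoe {g : α → α} (hg : Continuous g) {d v c : α}
    (hdv : d ≤ v) (hvc : v < c) (hd : g d = c) (hv : g v ≤ d) (hc : IsFixedPt g c) {k : ℕ}
    (hk : 0 < k) : ∃ y ∈ Icc d v, minimalPeriod g y = k ∧ ∀ i, g^[i] y ∈ Icc d c := by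
  have hJ : SurjOn g (Icc v c) (Icc (g v) c) := by
    simpa only [SurjOn, hc.eq] using intermediate_value_Icc hvc.le hg.continuousOn
  have hK : SurjOn g (Icc d v) (Icc (g v) c) := by
    simpa only [SurjOn, hd] using intermediate_value_Icc' hdv hg.continuousOn
  obtain ⟨y, hyK, hy, hmem⟩ := exists_minimalPeriod_eq_of_surjOn hg
    (J := ⟨(v, c), hvc.le⟩) (K := ⟨(d, v), hdv⟩)
    (hJ.mono subset_rfl (Icc_subset_Icc hv hvc.le))
    (hK.mono subset_rfl (Icc_subset_Icc_left (hv.trans hdv)))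
    (hK.mono subset_rfl (Icc_subset_Icc hv hvc.le))
    (fun t htJ htK hgt hggt => by
      obtain rfl : t = v := htK.2.antisymm htJ.1
      rw [hv.antisymm hgt.1, hd] at hggt
      exact hvc.not_ge hggt.2) hk
  refine ⟨y, hyK, hy, fun i => ?_⟩
  rw [← Icc_union_Icc_eq_Icc hdv hvc.le]
  exact (hmem i).symm

theorem lt_apply_of_forall_apply_apply_ne {f : α → α} {s : Set α} (hs : s.OrdConnected)
    (hf : ContinuousOn f s) {v z : α} (hz : IsFixedPt f z) (hv : v ∈ s) (hzv : z < f v)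
    (hne : ∀ t ∈ s, f (f t) ≠ z) : ∀ t ∈ s, z < f t := by
  by_contra! ⟨t, ht, hle⟩
  obtain ⟨r, hr, hfr⟩ := hf.surjOn_Icc ht hv ⟨hle, hzv.le⟩
  exact hne r hr (by rw [hfr, hz])

theorem exists_minimalPeriod_eq_two_mul_of_le_iterate_two {f : α → α} (hf : Continuous f)
    {t v c z : α} (hz : IsFixedPt f z) (hzv : z < f v) (hc : IsFixedPt f^[2] c) (hcz : c ≤ z)
    (htv : t ≤ v) (hvc : v < c) (ht : c ≤ f^[2] t) (hv : f^[2] v ≤ t) {k : ℕ} (hk : 0 < k) :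
    ∃ y, minimalPeriod f y = 2 * k := by
  have hg : Continuous f^[2] := hf.iterate 2
  obtain ⟨d, ⟨htd, hdv⟩, hd, hlt⟩ := exists_mem_Ico_eq_forall_lt htv hg.continuousOn
    (continuousOn_const (c := c)) ht (hv.trans_lt (htv.trans_lt hvc))
  have hgt : ∀ r ∈ Ioc d v, z < f r := lt_apply_of_forall_apply_apply_ne ordConnected_Ioc
    hf.continuousOn hz (right_mem_Ioc.2 hdv) hzv fun r hr => ((hlt r hr).trans_le hcz).ne
  have hge : ∀ r ∈ Icc d v, z ≤ f r := fun r hr =>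
    le_on_closure (fun r hr => (hgt r hr).le) continuousOn_const hf.continuousOn
      ((closure_Ioc hdv.ne).symm ▸ hr)
  obtain ⟨y, hy, hper, hmem⟩ :=
    exists_minimalPeriod_eq_of_horseshoe hg hdv.le hvc hd (hv.trans htd) hc hk
  refine ⟨y, ?_⟩
  rw [minimalPeriod_eq_two_mul hz (hy.2.trans_lt (hvc.trans_le hcz)).ne (hge y hy)
    fun i => (hmem i).2.trans hcz, hper]

theorem exists_minimalPeriod_eq_two_mul_of_forall_iterate_two_mem {f : α → α} (hf : Continuous f)
    {s : Set α} (hs : s.OrdConnected) {x z : α} (hz : IsFixedPt f z)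
    (hsz : ∀ t ∈ s, t < z ∧ z < f t) (hxs : ∀ i, (f^[2])^[i] x ∈ s) (hx : minimalPeriod f x = 6)
    {k : ℕ} (hk : 0 < k) : ∃ y, minimalPeriod f y = 2 * k := by
  have hx3 : minimalPeriod f^[2] x = 3 := by
    rw [minimalPeriod_iterate_eq_div_gcd two_ne_zero, hx]
    rfl
  obtain ⟨y, hper, hys⟩ :=
    exists_minimalPeriod_eq_of_minimalPeriod_eq_three (hf.iterate 2) hs hxs hx3 hk
  refine ⟨y, ?_⟩
  rw [minimalPeriod_eq_two_mul hz (hsz y (hys 0)).1.ne (hsz y (hys 0)).2.le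
    fun i => (hsz _ (hys i)).1.le, hper]

theorem exists_lt_lt_apply_and_iterate_two_eq {f : α → α} (hf : Continuous f) {m : α}
    (hmin : ∀ i, m ≤ f^[i] m) (hm : 3 ≤ minimalPeriod f m) :
    ∃ v, m < v ∧ v < f v ∧ f^[2] v = m := by
  obtain ⟨n, hn⟩ : ∃ n, minimalPeriod f m = n + 1 := ⟨_, (Nat.sub_add_cancel (by omega)).symm⟩
  have hne : ∀ i ∈ Ioo 0 3, f^[i] m ≠ m := fun i hi =>
    not_isPeriodicPt_of_pos_of_lt_minimalPeriod hi.1.ne' (hi.2.trans_le hm)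
  have hfb : f (f^[n] m) = m := by
    rw [← iterate_succ_apply' f, Nat.succ_eq_add_one, ← hn, iterate_minimalPeriod]
  have hmb : m < f^[n] m := (hmin n).lt_of_ne fun h => hne 1 (by simp) (by rwa [← h] at hfb)
  obtain ⟨t, ht, hbt⟩ : ∃ t ∈ Icc m (f^[n] m), f^[n] m ≤ f t := by
    by_contra! hlt
    have horb : ∀ i, f^[i] m < f^[n] m := fun i => by
      induction i with
      | zero => exact hmb
      | succ i ih =>
        rw [iterate_succ_apply']
        exact hlt _ ⟨hmin i, ih.le⟩
    exact (horb n).false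
  obtain ⟨v, hv, hfv⟩ := (hf.continuousOn (s := Icc t (f^[n] m))).surjOn_Icc
    (right_mem_Icc.2 ht.2) (left_mem_Icc.2 ht.2) ⟨hfb.trans_le hmb.le, hbt⟩
  have hgv : f^[2] v = m := by rw [← hfb, ← hfv]; rfl
  refine ⟨v, (ht.1.trans hv.1).lt_of_ne ?_, hfv.symm ▸ hv.2.lt_of_ne ?_, hgv⟩
  · rintro rfl
    exact hne 2 (by simp) hgv
  · rintro rfl
    exact hmb.ne' (hfv.symm.trans hfb)

theorem exists_minimalPeriod_eq_two_mul_of_minimalPeriod_eq_six {f : α → α} (hf : Continuous f)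
    {x : α} (hx : minimalPeriod f x = 6) {k : ℕ} (hk : 0 < k) :
    ∃ y, minimalPeriod f y = 2 * k := by
  have hxper : x ∈ periodicPts f := minimalPeriod_pos_iff_mem_periodicPts.1 (by omega)
  obtain ⟨i, hmin⟩ := exists_forall_iterate_le_iterate hxper
  have hm := (minimalPeriod_apply_iterate hxper i).trans hx
  generalize f^[i] x = m at hmin hm
  obtain ⟨v, hmv, hvb, hgv⟩ := exists_lt_lt_apply_and_iterate_two_eq hf hmin (by omega)
  obtain ⟨z, ⟨hvz, hzb⟩, hz⟩ := exists_mem_Icc_isFixedPt hf.continuousOn hvb.le hvb.le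
    (hgv.trans_le (hmv.trans hvb).le)
  have hzv : z < f v := hzb.lt_of_ne fun h =>
    (hmv.trans hvb).ne (hgv.symm.trans (h ▸ hz : IsFixedPt f (f v)))
  obtain ⟨c, ⟨hvc, hcz⟩, hc, hlt⟩ := exists_mem_Ioc_eq_forall_lt hvz
    (hf.iterate 2).continuousOn continuousOn_id (hgv.trans_lt hmv) (hz.iterate 2).ge
  by_cases hreach : ∃ t ∈ Icc m v, c ≤ f^[2] t
  · obtain ⟨t, ht, hct⟩ := hreach
    exact exists_minimalPeriod_eq_two_mul_of_le_iterate_two hf hz hzv hc hcz ht.2 hvc hct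
      (hgv.trans_le ht.1) hk
  push Not at hreach
  have hbelow : ∀ t ∈ Ico m c, f^[2] t < c := fun t ht =>
    (le_total t v).elim (fun h => hreach t ⟨ht.1, h⟩) fun h => (hlt t ⟨h, ht.2⟩).trans ht.2
  have hgt : ∀ t ∈ Ico m c, z < f t := lt_apply_of_forall_apply_apply_ne ordConnected_Ico
    hf.continuousOn hz ⟨hmv.le, hvc⟩ hzv fun t ht => ((hbelow t ht).trans_le hcz).ne
  have horb : ∀ i, (f^[2])^[i] m ∈ Ico m c := fun i => by
    refine ⟨iterate_mul f 2 i ▸ hmin _, ?_⟩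
    induction i with
    | zero => exact hmv.trans hvc
    | succ i ih =>
      rw [iterate_succ_apply']
      exact hbelow _ ⟨iterate_mul f 2 i ▸ hmin _, ih⟩
  exact exists_minimalPeriod_eq_two_mul_of_forall_iterate_two_mem hf ordConnected_Ico hz
    (fun t ht => ⟨ht.2.trans_le hcz, hgt t ht⟩) horb hm hk

end ConditionallyCompleteLinearOrder

theorem period_six_implies_all_even_periods_general {α : Type*}
    [ConditionallyCompleteLinearOrder α] [TopologicalSpace α] [OrderTopology α] [DenselyOrdered α]
    {s : Set α} (hs : s.OrdConnected) {f : α → α} (hcont : ContinuousOn f s) (hmaps : MapsTo f s s)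
    {x : α} (hx : x ∈ s) (hper : minimalPeriod f x = 6) {n : ℕ} (hn : Even n) (hn0 : 0 < n) :
    ∃ y ∈ s, minimalPeriod f y = n := by
  have : Inhabited s := ⟨⟨x, hx⟩⟩
  obtain ⟨k, rfl⟩ := hn.two_dvd
  obtain ⟨y, hy⟩ := exists_minimalPeriod_eq_two_mul_of_minimalPeriod_eq_six
    (hcont.mapsToRestrict hmaps) (x := ⟨x, hx⟩) ((minimalPeriod_restrict hmaps _).trans hper)
    (Nat.pos_of_mul_pos_left hn0)
  exact ⟨y, y.2, (minimalPeriod_restrict hmaps y).symm.trans hy⟩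

theorem period_six_implies_all_even_periods (a b : ℝ) (hab : a ≤ b) (f : ℝ → ℝ)
    (hcont : ContinuousOn f (Set.Icc a b))
    (hmaps : Set.MapsTo f (Set.Icc a b) (Set.Icc a b))
    (x : ℝ) (hx : x ∈ Set.Icc a b) (hper : PeriodPt f 6 x) :
    ∀ n : ℕ, Even n → 0 < n → ∃ y ∈ Set.Icc a b, PeriodPt f n y := by
  intro n hn hn0
  simp only [periodPt_iff_minimalPeriod_eq hn0]
  exact period_six_implies_all_even_periods_general ordConnected_Icc hcont hmaps hx
    ((periodPt_iff_minimalPeriod_eq (by norm_num)).1 hper) hn hn0
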